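/- arXiv:2503.16002 — 2 statements merged into one kernel-verified Lean document; each statement's English description precedes it below -/
import Mathlib

section
/- In every delivery instance, every Pareto optimal allocation is non-wasteful. -/
/-- A delivery instance: a finite tree rooted at the hub (encoded by a parent
function `par`; the edges of the tree are the pairs `{v, par v}` for `v ≠ hub`),
positive edge weights (`w v` is the weight of the edge between `v` and its
parent, for `v ≠ hub`), and `n` agents. -/
structure DeliveryInstance where
  V : Type
  fintypeV : Fintype V
  decEqV : DecidableEq V
  hub : V
  par : V → V
  w : V → ℝ
  par_hub : par hub = hub
  reaches_hub : ∀ v : V, ∃ k : ℕ, par^[k] v = hub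
  w_pos : ∀ v : V, v ≠ hub → 0 < w v
  n : ℕ
  n_pos : 0 < n

attribute [instance] DeliveryInstance.fintypeV DeliveryInstance.decEqV

namespace DeliveryInstance

variable (I : DeliveryInstance)

/-- `u` lies on the path from the hub to `v` (equivalently, `u` is a weak
ancestor of `v` in the tree rooted at the hub). -/
def Anc (u v : I.V) : Prop := ∃ k : ℕ, I.par^[k] v = u

/-- A leaf of the tree rooted at the hub: a vertex with no children. -/
def IsLeaf (v : I.V) : Prop := ∀ u : I.V, I.par u = v → u = v

/-- The set of leaves of the topology. -/
def leaves : Set I.V := {v : I.V | I.IsLeaf v}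

/-- The instance is unweighted if every edge has weight 1. -/
def Unweighted : Prop := ∀ v : I.V, v ≠ I.hub → I.w v = 1

/-- The cost of servicing a set `A` of orders: the total weight of the edges of
the tree that lie on the path from the hub to some vertex of `A` (the edge
between `u ≠ hub` and its parent lies on such a path iff `u` is a weak ancestor
of a member of `A`).  In particular `cost ∅ = 0`. -/
noncomputable def cost (A : Set I.V) : ℝ :=
  ∑ u : I.V, Set.indicator {u : I.V | u ≠ I.hub ∧ ∃ v ∈ A, I.Anc u v} I.w u

/-- The bundle of agent `i` under allocation `π`: the set of orders serviced by `i`. -/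
def bundle (π : I.V → Fin I.n) (i : Fin I.n) : Set I.V :=
  {v : I.V | v ≠ I.hub ∧ π v = i}

/-- An allocation is non-wasteful if every order `v` is serviced by an agent
that also services some leaf of the subtree rooted at `v`. -/
def NonWasteful (π : I.V → Fin I.n) : Prop :=
  ∀ v : I.V, v ≠ I.hub → ∃ l : I.V, I.IsLeaf l ∧ I.Anc v l ∧ π l = π v

/-- Total (utilitarian) cost of an allocation. -/
noncomputable def totalCost (π : I.V → Fin I.n) : ℝ :=
  ∑ i : Fin I.n, I.cost (I.bundle π i)

/-- The maximum bundle cost of an allocation. -/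
noncomputable def maxCost (π : I.V → Fin I.n) : ℝ :=
  Finset.univ.sup' ⟨⟨0, I.n_pos⟩, Finset.mem_univ _⟩ fun i : Fin I.n => I.cost (I.bundle π i)

/-- The minimax (MMS) share of the instance: the minimum over all allocations
of the maximum bundle cost. -/
noncomputable def MMSshare : ℝ :=
  Finset.univ.inf' ⟨fun _ => ⟨0, I.n_pos⟩, Finset.mem_univ _⟩
    fun π : I.V → Fin I.n => I.maxCost π

/-- An allocation is MMS if every bundle costs at most the MMS share. -/
def IsMMS (π : I.V → Fin I.n) : Prop :=
  ∀ i : Fin I.n, I.cost (I.bundle π i) ≤ I.MMSshare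

/-- Pareto optimality: no allocation makes every agent weakly better off and
some agent strictly better off. -/
def ParetoOptimal (π : I.V → Fin I.n) : Prop :=
  ¬ ∃ π' : I.V → Fin I.n,
      (∀ i : Fin I.n, I.cost (I.bundle π' i) ≤ I.cost (I.bundle π i)) ∧
      ∃ j : Fin I.n, I.cost (I.bundle π' j) < I.cost (I.bundle π j)

/-- Utilitarian optimality: minimizes the sum of bundle costs. -/
def UtilitarianOptimal (π : I.V → Fin I.n) : Prop :=
  ∀ π' : I.V → Fin I.n, I.totalCost π ≤ I.totalCost π'

/-- Egalitarian optimality: minimizes the maximum bundle cost. -/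
def EgalitarianOptimal (π : I.V → Fin I.n) : Prop :=
  ∀ π' : I.V → Fin I.n, I.maxCost π ≤ I.maxCost π'

/-- Envy-freeness. -/
def EF (π : I.V → Fin I.n) : Prop :=
  ∀ i j : Fin I.n, I.cost (I.bundle π i) ≤ I.cost (I.bundle π j)

/-- Envy-freeness up to one order. -/
def EF1 (π : I.V → Fin I.n) : Prop :=
  ∀ i j : Fin I.n,
    I.bundle π i = ∅ ∨ ∃ v ∈ I.bundle π i, I.cost (I.bundle π i \ {v}) ≤ I.cost (I.bundle π j)

end DeliveryInstance

/-!
Hand every order `x` to the agent who services a fixed leaf below `x`. That agent passes through `x`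
on the way to the leaf anyway, so no agent's route grows. If `π` is wasteful at `v`, then `π v`
services no leaf below `v`, and so receives nothing at or below `v`: the edge above `v` leaves
that agent's route, and the reallocation is a Pareto improvement.
-/

namespace DeliveryInstance

section Ancestors

variable {I : DeliveryInstance}

theorem Anc.refl (v : I.V) : I.Anc v v := ⟨0, rfl⟩

theorem Anc.trans {u v x : I.V} (huv : I.Anc u v) (hvx : I.Anc v x) : I.Anc u x := by
  obtain ⟨k, rfl⟩ := huv
  obtain ⟨m, rfl⟩ := hvx
  exact ⟨k + m, Function.iterate_add_apply _ _ _ _⟩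

theorem anc_par (v : I.V) : I.Anc (I.par v) v := ⟨1, rfl⟩

theorem Anc.ne_hub {u v : I.V} (huv : I.Anc u v) (hu : u ≠ I.hub) : v ≠ I.hub := by
  rintro rfl
  obtain ⟨k, rfl⟩ := huv
  exact hu (Function.iterate_fixed I.par_hub k)

end Ancestors

section Leaves

variable (I : DeliveryInstance)

/-- The depth of `v` in the tree: the number of edges on the path from the hub to `v`. It serves
to find leaves, as the deepest vertices of subtrees. -/
noncomputable def depth (v : I.V) : ℕ := Nat.find (I.reaches_hub v)

theorem depth_par_lt {v : I.V} (hv : v ≠ I.hub) : I.depth (I.par v) < I.depth v := by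
  have hspec : I.par^[I.depth v] v = I.hub := Nat.find_spec (I.reaches_hub v)
  cases hk : I.depth v with
  | zero => exact absurd (by rwa [hk] at hspec) hv
  | succ k =>
    rw [hk, Function.iterate_succ_apply] at hspec
    exact Nat.lt_succ_of_le (Nat.find_min' (I.reaches_hub (I.par v)) hspec)

theorem exists_isLeaf_anc (v : I.V) : ∃ l, I.IsLeaf l ∧ I.Anc v l := by
  obtain ⟨l, hvl, hmax⟩ :=
    {x | I.Anc v x}.exists_max_image I.depth (Set.toFinite _) ⟨v, Anc.refl v⟩
  refine ⟨l, ?_, hvl⟩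
  rintro u rfl
  by_contra hne
  have hu : u ≠ I.hub := by
    rintro rfl
    exact hne I.par_hub.symm
  exact (I.depth_par_lt hu).not_ge (hmax u (hvl.trans (anc_par u)))

/-- A chosen leaf of the subtree rooted at `v`, whose agent takes over `v` in the Pareto
improvement of a wasteful allocation. -/
noncomputable def leafBelow (v : I.V) : I.V := (I.exists_isLeaf_anc v).choose

theorem isLeaf_leafBelow (v : I.V) : I.IsLeaf (I.leafBelow v) :=
  (I.exists_isLeaf_anc v).choose_spec.1

theorem anc_leafBelow (v : I.V) : I.Anc v (I.leafBelow v) :=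
  (I.exists_isLeaf_anc v).choose_spec.2

end Leaves

section Routes

variable {I : DeliveryInstance}

variable (I) in
/-- The edges on the paths from the hub to the orders in `A`, whose total weight is the cost of `A`.
Each edge is represented by its endpoint farther from the hub. -/
def route (A : Set I.V) : Set I.V := {u | u ≠ I.hub ∧ ∃ v ∈ A, I.Anc u v}

theorem route_subset_route {A B : Set I.V} (h : A ⊆ I.route B) : I.route A ⊆ I.route B := by
  rintro u ⟨hu, v, hvA, huv⟩
  obtain ⟨-, x, hxB, hvx⟩ := h hvA
  exact ⟨hu, x, hxB, huv.trans hvx⟩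

theorem cost_eq_sum_route (A : Set I.V) :
    I.cost A = ∑ u ∈ (I.route A).toFinite.toFinset, I.w u := by
  classical
  simp only [cost, route, Set.indicator_apply, ← Finset.sum_filter]
  congr 1
  ext u
  simp

theorem cost_le_cost_of_route_subset {A B : Set I.V} (h : I.route A ⊆ I.route B) :
    I.cost A ≤ I.cost B := by
  rw [cost_eq_sum_route, cost_eq_sum_route]
  refine Finset.sum_le_sum_of_subset_of_nonneg (Set.Finite.toFinset_mono h) fun u hu _ => ?_
  rw [Set.Finite.mem_toFinset] at hu
  exact (I.w_pos u hu.1).le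

theorem cost_lt_cost_of_route_ssubset {A B : Set I.V} (h : I.route A ⊂ I.route B) :
    I.cost A < I.cost B := by
  obtain ⟨v, hvB, hvA⟩ := Set.exists_of_ssubset h
  rw [cost_eq_sum_route, cost_eq_sum_route]
  refine Finset.sum_lt_sum_of_subset (Set.Finite.toFinset_mono h.subset) (i := v)
    (by simpa using hvB) (by simpa using hvA) (I.w_pos v hvB.1) fun u hu _ => ?_
  rw [Set.Finite.mem_toFinset] at hu
  exact (I.w_pos u hu.1).le

end Routes

section Bundles

variable {I : DeliveryInstance} (π : I.V → Fin I.n)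

theorem mem_route_bundle {v : I.V} (hv : v ≠ I.hub) : v ∈ I.route (I.bundle π (π v)) :=
  ⟨hv, v, ⟨hv, rfl⟩, Anc.refl v⟩

theorem route_bundle_comp_subset {f : I.V → I.V} (hf : ∀ v, I.Anc v (f v)) (i : Fin I.n) :
    I.route (I.bundle (π ∘ f) i) ⊆ I.route (I.bundle π i) := by
  refine route_subset_route ?_
  rintro v ⟨hv, hvi⟩
  exact ⟨hv, f v, ⟨(hf v).ne_hub hv, hvi⟩, hf v⟩

theorem exists_isLeaf_of_mem_route_bundle_comp_leafBelow {v : I.V} {i : Fin I.n}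
    (h : v ∈ I.route (I.bundle (π ∘ I.leafBelow) i)) :
    ∃ l, I.IsLeaf l ∧ I.Anc v l ∧ π l = i := by
  obtain ⟨-, x, ⟨-, hx⟩, hvx⟩ := h
  exact ⟨I.leafBelow x, I.isLeaf_leafBelow x, hvx.trans (I.anc_leafBelow x), hx⟩

end Bundles

end DeliveryInstance

/-- Every Pareto optimal allocation is non-wasteful. -/
theorem stmt1 (I : DeliveryInstance) (π : I.V → Fin I.n)
    (h : I.ParetoOptimal π) : I.NonWasteful π := by
  intro v hv
  by_contra hwaste
  have hsub := DeliveryInstance.route_bundle_comp_subset π I.anc_leafBelow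
  have hssub : I.route (I.bundle (π ∘ I.leafBelow) (π v)) ⊂ I.route (I.bundle π (π v)) :=
    (hsub (π v)).ssubset_of_mem_notMem (DeliveryInstance.mem_route_bundle π hv) fun hmem =>
      hwaste (DeliveryInstance.exists_isLeaf_of_mem_route_bundle_comp_leafBelow π hmem)
  exact h ⟨π ∘ I.leafBelow, fun i => DeliveryInstance.cost_le_cost_of_route_subset (hsub i),
    π v, DeliveryInstance.cost_lt_cost_of_route_ssubset hssub⟩
end

section
/- Let k, B ∈ ℕ and let a_1,…,a_{3k} be positive integers with Σ_{i=1}^{3k} a_i = k·B and B/4 < a_i < B/2 for every i. Let I be the delivery instance with k agents whose topology is a star with center the hub h and with one order v_i joined to h by an edge of weight a_i for each i ∈ [3k]. Then MMS(I) ≤ B if and only if there exists a partition of {1,…,3k} into k sets S_1,…,S_k, each of size exactly 3, such that Σ_{i∈S_j} a_i = B for every j ∈ [k]. -/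
/-!
Serving a bundle in a star costs the sum of its weights, so `MMS(I) ≤ B` says that the weights can
be packed into `k` bins of capacity `B`. As the total weight is `k * B`, all bins are then exactly
full, and a family of numbers in `(B / 4, B / 2)` with sum `B` has more than two and fewer than four
members.
-/

section Packing

variable {ι κ M : Type*} [Fintype ι] [DecidableEq κ]

theorem exists_forall_fiber_iff_exists_partition {P : κ → Finset ι → Prop} :
    (∃ f : ι → κ, ∀ j, P j {i | f i = j}) ↔
      ∃ S : κ → Finset ι, (∀ i, ∃! j, i ∈ S j) ∧ ∀ j, P j (S j) := by
  constructor
  · rintro ⟨f, hf⟩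
    exact ⟨fun j => {i | f i = j}, fun i => by simp, hf⟩
  · rintro ⟨S, hS, hP⟩
    choose f hf hf_unique using hS
    have hfiber (j : κ) : ({i | f i = j} : Finset ι) = S j := by
      ext i
      simp only [Finset.mem_filter_univ]
      exact ⟨fun h => h ▸ hf i, fun h => (hf_unique i j h).symm⟩
    exact ⟨f, fun j => (hfiber j).symm ▸ hP j⟩

theorem forall_sum_fiber_le_iff_eq [Fintype κ] [AddCommMonoid M] [PartialOrder M]
    [IsOrderedCancelAddMonoid M] {a : ι → M} {B : M}
    (hsum : ∑ i, a i = Fintype.card κ • B) (f : ι → κ) :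
    (∀ j, ∑ i with f i = j, a i ≤ B) ↔ ∀ j, ∑ i with f i = j, a i = B := by
  refine ⟨fun hle j => ?_, fun heq j => (heq j).le⟩
  have htotal : ∑ j, ∑ i with f i = j, a i = ∑ _j : κ, B := by
    rw [Finset.sum_fiberwise, hsum, Finset.sum_const, Finset.card_univ]
  exact (Finset.sum_eq_sum_iff_of_le fun j _ => hle j).1 htotal j (Finset.mem_univ j)

end Packing

theorem card_eq_three_of_sum_eq {ι R : Type*} [Semiring R] [LinearOrder R] [IsStrictOrderedRing R]
    {s : Finset ι} {a : ι → R} {B : R} (hB : 0 < B) (hlow : ∀ i ∈ s, B < 4 * a i)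
    (hhigh : ∀ i ∈ s, 2 * a i < B) (hsum : ∑ i ∈ s, a i = B) : s.card = 3 := by
  have hs : s.Nonempty := Finset.nonempty_of_sum_ne_zero (hsum.trans_ne hB.ne')
  have hlt_four : (s.card : R) * B < 4 * B :=
    calc (s.card : R) * B = ∑ _i ∈ s, B := by rw [Finset.sum_const, nsmul_eq_mul]
      _ < ∑ i ∈ s, 4 * a i := Finset.sum_lt_sum_of_nonempty hs hlow
      _ = 4 * B := by rw [← Finset.mul_sum, hsum]
  have htwo_lt : 2 * B < (s.card : R) * B :=
    calc 2 * B = ∑ i ∈ s, 2 * a i := by rw [← Finset.mul_sum, hsum]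
      _ < ∑ _i ∈ s, B := Finset.sum_lt_sum_of_nonempty hs hhigh
      _ = (s.card : R) * B := by rw [Finset.sum_const, nsmul_eq_mul]
  have hcard_lt : s.card < 4 := by exact_mod_cast lt_of_mul_lt_mul_right hlt_four hB.le
  have hlt_card : 2 < s.card := by exact_mod_cast lt_of_mul_lt_mul_right htwo_lt hB.le
  omega

namespace DeliveryInstance

variable {I : DeliveryInstance}

theorem maxCost_le_iff {π : I.V → Fin I.n} {r : ℝ} :
    I.maxCost π ≤ r ↔ ∀ i, I.cost (I.bundle π i) ≤ r :=
  (Finset.sup'_le_iff _ _).trans (by simp only [Finset.mem_univ, forall_const])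

theorem MMSshare_le_iff {r : ℝ} :
    I.MMSshare ≤ r ↔ ∃ π : I.V → Fin I.n, ∀ i, I.cost (I.bundle π i) ≤ r :=
  (Finset.inf'_le_iff _).trans (by simp only [Finset.mem_univ, true_and, maxCost_le_iff])

/-- The topology is a star centered at the hub: every order is joined directly to the hub. -/
def IsStar (I : DeliveryInstance) : Prop := ∀ v : I.V, v ≠ I.hub → I.par v = I.hub

namespace IsStar

theorem anc_iff (hI : I.IsStar) {u v : I.V} : I.Anc u v ↔ u = v ∨ u = I.hub := by
  constructor
  · rintro ⟨_ | t, rfl⟩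
    · exact .inl rfl
    · have hpar : I.par v = I.hub := by
        by_cases hv : v = I.hub
        · rw [hv, I.par_hub]
        · exact hI v hv
      right
      rw [Function.iterate_succ_apply, hpar, Function.iterate_fixed I.par_hub]
  · rintro (rfl | rfl)
    · exact ⟨0, rfl⟩
    · exact I.reaches_hub v

theorem cost_eq_sum (hI : I.IsStar) (A : Set I.V) :
    I.cost A = ∑ u, (A \ {I.hub}).indicator I.w u := by
  have hserved : {u | u ≠ I.hub ∧ ∃ v ∈ A, I.Anc u v} = A \ {I.hub} := by
    ext u
    simp only [hI.anc_iff, Set.mem_ofPred_eq, Set.mem_sdiff, Set.mem_singleton_iff]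
    grind
  rw [cost, hserved]

variable {ι : Type*} [Fintype ι] {a : ι → ℝ} {e : {v : I.V // v ≠ I.hub} ≃ ι}

theorem cost_bundle (hI : I.IsStar) (hw : ∀ v : {v : I.V // v ≠ I.hub}, I.w v = a (e v))
    (π : I.V → Fin I.n) (j : Fin I.n) :
    I.cost (I.bundle π j) = ∑ i with π (e.symm i) = j, a i := by
  have hbundle : I.bundle π j \ {I.hub} = {v | v ≠ I.hub ∧ π v = j} := by
    ext v
    simp only [bundle, Set.mem_sdiff, Set.mem_ofPred_eq, Set.mem_singleton_iff]
    tauto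
  classical
  calc I.cost (I.bundle π j)
      = ∑ v with v ≠ I.hub, if π v = j then I.w v else 0 := by
        rw [hI.cost_eq_sum, hbundle, Finset.sum_filter]
        simp only [Set.indicator_apply, Set.mem_ofPred_eq, ite_and]
    _ = ∑ v : {v : I.V // v ≠ I.hub}, if π v = j then a (e v) else 0 := by
        simp only [← hw]
        exact Finset.sum_subtype _ (by simp) _
    _ = ∑ i with π (e.symm i) = j, a i := by
        rw [Finset.sum_filter, ← e.sum_comp]
        simp only [Equiv.symm_apply_apply]

theorem MMSshare_le_iff (hI : I.IsStar) (hw : ∀ v : {v : I.V // v ≠ I.hub}, I.w v = a (e v))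
    {r : ℝ} : I.MMSshare ≤ r ↔ ∃ f : ι → Fin I.n, ∀ j, ∑ i with f i = j, a i ≤ r := by
  have : Nonempty (Fin I.n) := ⟨⟨0, I.n_pos⟩⟩
  have hinj : Function.Injective fun i => (e.symm i : I.V) :=
    Subtype.val_injective.comp e.symm.injective
  simp only [DeliveryInstance.MMSshare_le_iff, hI.cost_bundle hw]
  exact (hinj.surjective_comp_right.exists
    (p := fun f : ι → Fin I.n => ∀ j, ∑ i with f i = j, a i ≤ r)).symm

end IsStar

end DeliveryInstance

theorem stmt13_general {ι : Type*} [Fintype ι] {I : DeliveryInstance} {a : ι → ℝ} {B : ℝ}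
    (hB : 0 < B) (hsum : ∑ i, a i = I.n * B)
    (hlow : ∀ i, B < 4 * a i) (hhigh : ∀ i, 2 * a i < B)
    (hI : I.IsStar) (e : {v : I.V // v ≠ I.hub} ≃ ι)
    (hw : ∀ v : {v : I.V // v ≠ I.hub}, I.w v = a (e v)) :
    I.MMSshare ≤ B ↔
      ∃ S : Fin I.n → Finset ι,
        (∀ i, ∃! j, i ∈ S j) ∧ (∀ j, (S j).card = 3) ∧ ∀ j, ∑ i ∈ S j, a i = B := by
  have hsum' : ∑ i, a i = Fintype.card (Fin I.n) • B := by
    rw [hsum, Fintype.card_fin, nsmul_eq_mul]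
  have htriple (s : Finset ι) : ∑ i ∈ s, a i = B ↔ s.card = 3 ∧ ∑ i ∈ s, a i = B :=
    iff_and_self.2 (card_eq_three_of_sum_eq hB (fun i _ => hlow i) fun i _ => hhigh i)
  calc I.MMSshare ≤ B
      ↔ ∃ f : ι → Fin I.n, ∀ j, ∑ i with f i = j, a i ≤ B := hI.MMSshare_le_iff hw
    _ ↔ ∃ f : ι → Fin I.n, ∀ j, ∑ i with f i = j, a i = B :=
        exists_congr (forall_sum_fiber_le_iff_eq hsum')
    _ ↔ ∃ S : Fin I.n → Finset ι, (∀ i, ∃! j, i ∈ S j) ∧ ∀ j, ∑ i ∈ S j, a i = B :=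
        exists_forall_fiber_iff_exists_partition (P := fun _ s => ∑ i ∈ s, a i = B)
    _ ↔ ∃ S : Fin I.n → Finset ι,
        (∀ i, ∃! j, i ∈ S j) ∧ (∀ j, (S j).card = 3) ∧ ∀ j, ∑ i ∈ S j, a i = B := by
        simp only [← forall_and, ← htriple]

/-- Let `a₁, …, a_{3k}` be positive integers summing to `k·B`
with `B/4 < aᵢ < B/2`, and let `I` be the `k`-agent instance whose topology is
a star centered at the hub with one order per `i ∈ [3k]` attached by an edge of
weight `aᵢ`.  Then `MMS(I) ≤ B` iff `[3k]` can be partitioned into `k` triples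
each summing to `B`. -/
theorem stmt13 (k B : ℕ) (a : Fin (3 * k) → ℕ)
    (hpos : ∀ i, 0 < a i) (hsum : ∑ i, a i = k * B)
    (hlow : ∀ i, B < 4 * a i) (hhigh : ∀ i, 2 * a i < B)
    (I : DeliveryInstance) (hk : I.n = k)
    (e : {v : I.V // v ≠ I.hub} ≃ Fin (3 * k))
    (hstar : ∀ v : I.V, v ≠ I.hub → I.par v = I.hub)
    (hw : ∀ v : {v : I.V // v ≠ I.hub}, I.w v.1 = (a (e v) : ℝ)) :
    I.MMSshare ≤ (B : ℝ) ↔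
      ∃ S : Fin k → Finset (Fin (3 * k)),
        (∀ i : Fin (3 * k), ∃! j : Fin k, i ∈ S j) ∧
        (∀ j, (S j).card = 3) ∧
        (∀ j, ∑ i ∈ S j, a i = B) := by
  subst hk
  have hB : 0 < B := (Nat.zero_le _).trans_lt (hhigh ⟨0, Nat.mul_pos three_pos I.n_pos⟩)
  exact_mod_cast stmt13_general (a := fun i => (a i : ℝ)) (B := B) (by exact_mod_cast hB)
    (by exact_mod_cast hsum) (by exact_mod_cast hlow) (by exact_mod_cast hhigh) hstar e hw
end
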